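/- Let P ∈ R[t] be expanded in Gegenbauer polynomials as P(t) = Σ_k f_k P_k^n(t) with all f_k ≥ 0 (where P_k^n is normalized so P_k^n(1) = 1). Then P(x·y), viewed as a kernel on S^{n-1}, is positive definite: for every finite C ⊂ S^{n-1} and α : C → R, Σ_{(c,c')} α(c)α(c') P(c·c') ≥ 0. -/

import Mathlib

open scoped RealInnerProductSpace

/-- The Gegenbauer polynomials `P_k^n` with parameter `n/2 - 1`, normalized so that
`P_k^n 1 = 1` (for `n = 2` these are the Chebyshev polynomials of the first kind),
defined via the standard three-term recurrence
`(k + n - 2) P_{k+2} = (2(k+1) + n - 2) t P_{k+1} - (k+1) P_k`. -/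
noncomputable def gegenbauerNormalized (n : ℕ) : ℕ → ℝ → ℝ
  | 0 => fun _ => 1
  | 1 => fun t => t
  | (k + 2) => fun t =>
      ((2 * ((k : ℝ) + 1) + (n : ℝ) - 2) * t * gegenbauerNormalized n (k + 1) t -
        ((k : ℝ) + 1) * gegenbauerNormalized n k t) / ((k : ℝ) + (n : ℝ) - 1)

/-!
Up to a positive constant, `P_k (x ⬝ᵥ y)` is the Gram kernel of the zonal harmonics `Z_x` of degree
`k` for the Fischer inner product on polynomials. In that inner product, multiplication by `Xᵢ` is
adjoint to `∂ᵢ`, hence multiplication by `y ⬝ᵥ X` to the directional derivative `D_y` and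
multiplication by `∑ i, Xᵢ²` to the Laplacian. Pairing the three-term recurrence of `Z_y` with a
harmonic form `p` therefore kills the `∑ i, Xᵢ²` term and trades `p` for the harmonic form `D_y p`
of one degree less, so that `⟨Z_y, p⟩ = c p(y)` with `c > 0`, by induction on the degree. The zonal
harmonics are themselves harmonic because `D_y` maps `Z_y` of degree `k + 1` to a multiple of `Z_y`
of degree `k`, and so `p = Z_x` gives the claim.
-/

section DifferentialOperators

open MvPolynomial

variable {σ R : Type*} [CommSemiring R]

/-- The derivation `∑ i, y i ∂ᵢ` of the polynomial ring, given by its values on the variables. -/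
noncomputable def dirDeriv (y : σ → R) : Derivation R (MvPolynomial σ R) (MvPolynomial σ R) :=
  mkDerivation R fun i => C (y i)

lemma pderiv_comm (i j : σ) (p : MvPolynomial σ R) :
    pderiv i (pderiv j p) = pderiv j (pderiv i p) := by
  classical
  obtain rfl | hij := eq_or_ne i j
  · rfl
  · ext s
    simp only [coeff_pderiv, add_right_comm s, Finsupp.add_apply, Finsupp.single_eq_of_ne hij,
      Finsupp.single_eq_of_ne hij.symm, add_zero, mul_right_comm]

lemma dirDeriv_monomial (y : σ → R) (s : σ →₀ ℕ) (a : R) :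
    dirDeriv y (monomial s a) = ∑ i ∈ s.support, y i • pderiv i (monomial s a) := by
  simp only [dirDeriv, mkDerivation_monomial, Finsupp.sum, Finset.smul_sum, pderiv_monomial]
  refine Finset.sum_congr rfl fun i _ => ?_
  simp [smul_eq_C_mul, C_mul_monomial, mul_comm, mul_left_comm]

variable {k : ℕ} {p : MvPolynomial σ R}

lemma isHomogeneous_dirDeriv (hp : p.IsHomogeneous (k + 1)) (y : σ → R) :
    (dirDeriv y p).IsHomogeneous k := by
  rw [p.as_sum, map_sum]
  refine .sum _ _ _ fun s hs => ?_
  have homogeneous_term : (monomial s (coeff s p)).IsHomogeneous (k + 1) :=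
    isHomogeneous_monomial _ (hp.degree_eq_sum_deg_support hs).symm
  rw [dirDeriv_monomial]
  exact .sum _ _ _ fun i _ => by simpa [smul_eq_C_mul] using homogeneous_term.pderiv.C_mul (y i)

lemma eval_dirDeriv_self (hp : p.IsHomogeneous k) (y : σ → R) :
    eval y (dirDeriv y p) = k * eval y p := by
  have eval_monomial_part (s : σ →₀ ℕ) (a : R) :
      eval y (dirDeriv y (monomial s a)) = s.degree * eval y (monomial s a) := by
    have term (i : σ) : y i * eval y (pderiv i (monomial s a)) = s i * eval y (monomial s a) := by
      simpa using congrArg (eval y) (X_mul_pderiv_monomial (i := i) (m := s) (r := a))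
    simp only [dirDeriv_monomial, map_sum, smul_eval, term, ← Finset.sum_mul, Finsupp.degree_apply,
      Nat.cast_sum]
  rw [p.as_sum]
  simp only [map_sum, eval_monomial_part, Finset.mul_sum]
  refine Finset.sum_congr rfl fun s hs => ?_
  rw [hp.degree_eq_sum_deg_support hs, Finsupp.degree_apply]

variable [Fintype σ]

/-- The polynomial `∑ i, y i Xᵢ`, representing `x ↦ y ⬝ᵥ x`. -/
noncomputable def linearForm (y : σ → R) : MvPolynomial σ R :=
  ∑ i, y i • X i

variable (σ R) in
/-- The Laplace operator `∑ i, ∂ᵢ²` on polynomials. -/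
noncomputable def polyLaplacian : MvPolynomial σ R →ₗ[R] MvPolynomial σ R :=
  ∑ i, (pderiv i).toLinearMap ∘ₗ (pderiv i).toLinearMap

lemma polyLaplacian_apply (p : MvPolynomial σ R) :
    polyLaplacian σ R p = ∑ i, pderiv i (pderiv i p) := by
  simp [polyLaplacian]

lemma eval_linearForm (y z : σ → R) : eval z (linearForm y) = y ⬝ᵥ z := by
  simp [linearForm, dotProduct, smul_eval]

lemma eval_psum_two (z : σ → R) : eval z (psum σ R 2) = z ⬝ᵥ z := by
  simp [psum, dotProduct, sq]

lemma isHomogeneous_linearForm (y : σ → R) : (linearForm y).IsHomogeneous 1 :=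
  .sum _ _ _ fun i _ => by simpa [smul_eq_C_mul] using isHomogeneous_C_mul_X (y i) i

lemma isHomogeneous_psum (k : ℕ) : (psum σ R k).IsHomogeneous k :=
  .sum _ _ _ fun i _ => isHomogeneous_X_pow i k

lemma dirDeriv_apply (y : σ → R) (p : MvPolynomial σ R) :
    dirDeriv y p = ∑ i, y i • pderiv i p := by
  classical
  have sum_apply (q : MvPolynomial σ R) : (∑ i, y i • pderiv i) q = ∑ i, y i • pderiv i q := by
    rw [← Derivation.coeFnAddMonoidHom_apply, map_sum, Finset.sum_apply]
    rfl
  have h : dirDeriv y = ∑ i, y i • pderiv i := derivation_ext fun j => by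
    simp [dirDeriv, sum_apply, pderiv_X, Pi.single_apply, smul_eq_C_mul]
  rw [h, sum_apply]

lemma dirDeriv_linearForm (y z : σ → R) : dirDeriv y (linearForm z) = C (z ⬝ᵥ y) := by
  simp [dirDeriv, linearForm, dotProduct, smul_eq_C_mul]

lemma dirDeriv_psum_two (y : σ → R) : dirDeriv y (psum σ R 2) = 2 * linearForm y := by
  simp only [dirDeriv, psum, sq, linearForm, map_sum, Derivation.leibniz, mkDerivation_X,
    smul_eq_mul, Finset.mul_sum, smul_eq_C_mul]
  exact Finset.sum_congr rfl fun i _ => by ring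

lemma pderiv_linearForm (y : σ → R) (i : σ) : pderiv i (linearForm y) = C (y i) := by
  classical
  simp [linearForm, pderiv_X, Pi.single_apply, smul_eq_C_mul]

lemma pderiv_psum_two (i : σ) : pderiv i (psum σ R 2) = 2 * X i := by
  classical
  simp [psum, sq, pderiv_X, Pi.single_apply, Finset.sum_add_distrib, two_mul]

lemma polyLaplacian_linearForm_mul (y : σ → R) (p : MvPolynomial σ R) :
    polyLaplacian σ R (linearForm y * p) =
      linearForm y * polyLaplacian σ R p + 2 * dirDeriv y p := by
  simp only [polyLaplacian_apply, dirDeriv_apply, Finset.mul_sum, ← Finset.sum_add_distrib]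
  refine Finset.sum_congr rfl fun i _ => ?_
  simp only [pderiv_mul, map_add, pderiv_linearForm, pderiv_C, smul_eq_C_mul]
  ring

lemma polyLaplacian_dirDeriv (y : σ → R) (p : MvPolynomial σ R) :
    polyLaplacian σ R (dirDeriv y p) = dirDeriv y (polyLaplacian σ R p) := by
  simp only [polyLaplacian_apply, dirDeriv_apply, map_sum, Derivation.map_smul]
  rw [Finset.sum_comm]
  simp only [pderiv_comm]

lemma polyLaplacian_psum_two_mul (hp : p.IsHomogeneous k) :
    polyLaplacian σ R (psum σ R 2 * p) =
      psum σ R 2 * polyLaplacian σ R p + (4 * k + 2 * Fintype.card σ : R) • p := by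
  have product_rule (i : σ) : pderiv i (pderiv i (psum σ R 2 * p)) =
      psum σ R 2 * pderiv i (pderiv i p) + (4 * (X i * pderiv i p) + 2 * p) := by
    have h2 : pderiv i (2 : MvPolynomial σ R) = 0 := (pderiv i).map_natCast 2
    simp only [pderiv_mul, map_add, pderiv_psum_two, pderiv_X_self, h2]
    ring
  simp only [polyLaplacian_apply, product_rule, Finset.sum_add_distrib, ← Finset.mul_sum,
    hp.sum_X_mul_pderiv, Finset.sum_const, Finset.card_univ]
  simp only [smul_eq_C_mul, map_add, map_mul, map_natCast, map_ofNat C, nsmul_eq_mul]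
  ring

end DifferentialOperators

section Fischer

open MvPolynomial

variable {σ R : Type*} [Fintype σ]

section CommSemiring

variable [CommSemiring R]

variable (σ R) in
/-- The Fischer inner product on polynomials: the monomials are orthogonal, and `X ^ s` has square
norm `∏ i, (s i)!`. The weights make multiplication by `Xᵢ` adjoint to `∂ᵢ`. -/
noncomputable def fischerForm : MvPolynomial σ R →ₗ[R] MvPolynomial σ R →ₗ[R] R :=
  (basisMonomials σ R).constr R fun s => ((∏ i, (s i).factorial : ℕ) : R) • lcoeff R s

lemma fischerForm_monomial (s : σ →₀ ℕ) (a : R) (q : MvPolynomial σ R) :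
    fischerForm σ R (monomial s a) q = a * (∏ i, (s i).factorial : ℕ) * coeff s q := by
  have h : monomial s a = a • basisMonomials σ R s := by simp [smul_monomial]
  rw [h, map_smul, fischerForm, Module.Basis.constr_basis]
  simp [mul_assoc, lcoeff]

lemma fischerForm_eq_sum (p q : MvPolynomial σ R) :
    fischerForm σ R p q =
      ∑ s ∈ p.support, coeff s p * (∏ i, (s i).factorial : ℕ) * coeff s q := by
  conv_lhs => rw [p.as_sum]
  simp only [map_sum, LinearMap.sum_apply, fischerForm_monomial]

lemma fischerForm_comm (p q : MvPolynomial σ R) :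
    fischerForm σ R p q = fischerForm σ R q p := by
  rw [fischerForm_eq_sum, fischerForm_eq_sum]
  refine Finset.sum_congr_of_eq_on_inter (fun s _ hs => ?_) (fun s _ hs => ?_) fun s _ _ => ?_
  · rw [notMem_support_iff.1 hs, mul_zero]
  · rw [notMem_support_iff.1 hs, mul_zero]
  · ring

lemma fischerForm_one_eq_eval {p : MvPolynomial σ R} (hp : p.IsHomogeneous 0) (y : σ → R) :
    fischerForm σ R 1 p = eval y p := by
  rw [← totalDegree_zero_iff_isHomogeneous, totalDegree_eq_zero_iff_eq_C] at hp
  rw [← C_1, C_apply, fischerForm_monomial, hp]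
  simp

lemma prod_factorial_add_single (s : σ →₀ ℕ) (i : σ) :
    ∏ j, ((s + Finsupp.single i 1 : σ →₀ ℕ) j).factorial = (s i + 1) * ∏ j, (s j).factorial := by
  classical
  have factor (j : σ) : ((s + Finsupp.single i 1 : σ →₀ ℕ) j).factorial =
      (if j = i then s j + 1 else 1) * (s j).factorial := by
    obtain rfl | hj := eq_or_ne j i <;> simp [Nat.factorial_succ, *]
  simp only [factor, Finset.prod_mul_distrib, Finset.prod_ite_eq', Finset.mem_univ, if_true]

lemma fischerForm_X_mul (i : σ) (p q : MvPolynomial σ R) :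
    fischerForm σ R (X i * p) q = fischerForm σ R p (pderiv i q) := by
  induction p using MvPolynomial.induction_on' with
  | add p₁ p₂ h₁ h₂ => simp [mul_add, h₁, h₂]
  | monomial s a =>
    have h : X i * monomial s a = monomial (s + Finsupp.single i 1) a := by
      rw [mul_comm, X, monomial_mul, mul_one]
    rw [h, fischerForm_monomial, fischerForm_monomial, coeff_pderiv, prod_factorial_add_single]
    push_cast
    ring

lemma fischerForm_linearForm_mul (y : σ → R) (p q : MvPolynomial σ R) :
    fischerForm σ R (linearForm y * p) q = fischerForm σ R p (dirDeriv y q) := by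
  simp [linearForm, dirDeriv_apply, Finset.sum_mul, fischerForm_X_mul]

lemma fischerForm_psum_two_mul (p q : MvPolynomial σ R) :
    fischerForm σ R (psum σ R 2 * p) q = fischerForm σ R p (polyLaplacian σ R q) := by
  simp [psum, sq, polyLaplacian_apply, Finset.sum_mul, mul_assoc, fischerForm_X_mul]

end CommSemiring

lemma isPosSemidef_fischerForm [CommRing R] [LinearOrder R] [IsStrictOrderedRing R] :
    (fischerForm σ R).IsPosSemidef where
  eq := fischerForm_comm
  nonneg p := by
    rw [fischerForm_eq_sum]
    refine Finset.sum_nonneg fun s _ => ?_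
    rw [mul_right_comm]
    exact mul_nonneg (mul_self_nonneg _) (by positivity)

end Fischer

section Zonal

open MvPolynomial

variable {σ K : Type*} [Fintype σ]

section Field

variable [Field K]

/-- The solid zonal harmonic of degree `k` with pole `y`: the homogeneous polynomial in `x` that
restricts to `P_k (y ⬝ᵥ x)` on unit vectors `x` when `y` is a unit vector. Its recurrence is the one
of `gegenbauerNormalized`, made homogeneous in both `x` and `y`. -/
noncomputable def zonalHarmonic (y : σ → K) : ℕ → MvPolynomial σ K
  | 0 => 1
  | 1 => linearForm y
  | k + 2 => (k + Fintype.card σ - 1 : K)⁻¹ •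
      ((2 * k + Fintype.card σ : K) • (linearForm y * zonalHarmonic y (k + 1)) -
        ((k + 1) * (y ⬝ᵥ y)) • (psum σ K 2 * zonalHarmonic y k))

lemma isHomogeneous_zonalHarmonic (y : σ → K) (k : ℕ) : (zonalHarmonic y k).IsHomogeneous k := by
  induction k using Nat.twoStepInduction with
  | zero => exact isHomogeneous_one _ _
  | one => exact isHomogeneous_linearForm y
  | more k hk hk' =>
    have hL := (isHomogeneous_linearForm y).mul hk'
    have hR := (isHomogeneous_psum (R := K) 2).mul hk
    rw [show 1 + (k + 1) = k + 2 by ring] at hL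
    rw [add_comm 2 k] at hR
    simp only [zonalHarmonic, smul_eq_C_mul]
    exact ((hL.C_mul _).sub (hR.C_mul _)).C_mul _

variable [CharZero K] [Nontrivial σ]

lemma add_card_sub_one_ne_zero (k : ℕ) : (k + Fintype.card σ - 1 : K) ≠ 0 := by
  have := Fintype.one_lt_card (α := σ)
  rw [sub_ne_zero]
  norm_cast
  omega

lemma zonalHarmonic_add_two (y : σ → K) (k : ℕ) :
    (k + Fintype.card σ - 1 : K) • zonalHarmonic y (k + 2) =
      (2 * k + Fintype.card σ : K) • (linearForm y * zonalHarmonic y (k + 1)) -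
        ((k + 1) * (y ⬝ᵥ y)) • (psum σ K 2 * zonalHarmonic y k) := by
  rw [zonalHarmonic, smul_inv_smul₀ (add_card_sub_one_ne_zero k)]

lemma dirDeriv_zonalHarmonic_add_two (y : σ → K) (k : ℕ) :
    (k + Fintype.card σ - 1 : K) • dirDeriv y (zonalHarmonic y (k + 2)) =
      (2 * k + Fintype.card σ : K) • ((y ⬝ᵥ y) • zonalHarmonic y (k + 1) +
          linearForm y * dirDeriv y (zonalHarmonic y (k + 1))) -
        ((k + 1) * (y ⬝ᵥ y)) • (2 * linearForm y * zonalHarmonic y k +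
          psum σ K 2 * dirDeriv y (zonalHarmonic y k)) := by
  have h := congrArg (dirDeriv y) (zonalHarmonic_add_two y k)
  simp only [Derivation.map_smul, map_sub, Derivation.leibniz, dirDeriv_linearForm,
    dirDeriv_psum_two, smul_eq_mul] at h
  rw [h]
  simp only [smul_eq_C_mul]
  ring

lemma dirDeriv_zonalHarmonic (y : σ → K) (k : ℕ) :
    dirDeriv y (zonalHarmonic y (k + 1)) = ((k + 1) * (y ⬝ᵥ y)) • zonalHarmonic y k := by
  induction k using Nat.twoStepInduction with
  | zero => simp [zonalHarmonic, dirDeriv_linearForm, smul_eq_C_mul]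
  | one =>
    apply smul_right_injective _ (add_card_sub_one_ne_zero (σ := σ) (K := K) 0)
    beta_reduce
    rw [dirDeriv_zonalHarmonic_add_two]
    simp only [zonalHarmonic, dirDeriv_linearForm, Derivation.map_one_eq_zero, ← algebraMap_eq]
    push_cast
    algebra
  | more k hk hk' =>
    apply smul_right_injective _ (add_card_sub_one_ne_zero (σ := σ) (K := K) (k + 1))
    beta_reduce
    rw [dirDeriv_zonalHarmonic_add_two, hk, hk']
    push_cast
    linear_combination (norm := algebra) (-((k + 2) * (y ⬝ᵥ y)) : K) • zonalHarmonic_add_two y k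

lemma polyLaplacian_zonalHarmonic (y : σ → K) (k : ℕ) :
    polyLaplacian σ K (zonalHarmonic y k) = 0 := by
  induction k using Nat.twoStepInduction with
  | zero => simp [zonalHarmonic, polyLaplacian_apply]
  | one => simp [zonalHarmonic, polyLaplacian_apply, pderiv_linearForm]
  | more k hk hk' =>
    simp only [zonalHarmonic, map_smul, map_sub, polyLaplacian_linearForm_mul,
      polyLaplacian_psum_two_mul (isHomogeneous_zonalHarmonic y k), hk, hk', dirDeriv_zonalHarmonic]
    algebra

end Field

theorem exists_pos_fischerForm_zonalHarmonic_eq [Field K] [LinearOrder K] [IsStrictOrderedRing K]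
    [Nontrivial σ] (k : ℕ) :
    ∃ c : K, 0 < c ∧ ∀ (y : σ → K) (p : MvPolynomial σ K), p.IsHomogeneous k →
      polyLaplacian σ K p = 0 → fischerForm σ K (zonalHarmonic y k) p = c * eval y p := by
  induction k using Nat.twoStepInduction with
  | zero =>
    refine ⟨1, one_pos, fun y p hp _ => ?_⟩
    rw [zonalHarmonic, fischerForm_one_eq_eval hp y, one_mul]
  | one =>
    refine ⟨1, one_pos, fun y p hp _ => ?_⟩
    rw [zonalHarmonic, ← mul_one (linearForm y), fischerForm_linearForm_mul,
      fischerForm_one_eq_eval (isHomogeneous_dirDeriv hp y), eval_dirDeriv_self hp, Nat.cast_one]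
  | more k _ ih =>
    obtain ⟨c, hc, reproducing⟩ := ih
    have card_gt_one : (1 : K) < Fintype.card σ := by exact_mod_cast Fintype.one_lt_card
    have denominator_pos : (0 : K) < k + Fintype.card σ - 1 := by
      linarith [(Nat.cast_nonneg k : (0 : K) ≤ k)]
    refine ⟨(k + Fintype.card σ - 1 : K)⁻¹ * (2 * k + Fintype.card σ) * (k + 2) * c,
      by positivity, fun y p hp harmonic => ?_⟩
    have reproducing_dirDeriv := reproducing y (dirDeriv y p) (isHomogeneous_dirDeriv hp y)
      (by rw [polyLaplacian_dirDeriv, harmonic, map_zero])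
    rw [eval_dirDeriv_self hp] at reproducing_dirDeriv
    simp only [zonalHarmonic, map_smul, map_sub, LinearMap.smul_apply, LinearMap.sub_apply,
      fischerForm_linearForm_mul, fischerForm_psum_two_mul, harmonic,
      reproducing_dirDeriv, map_zero, smul_eq_mul]
    push_cast
    ring

lemma eval_zonalHarmonic {y z : σ → ℝ} (hy : y ⬝ᵥ y = 1) (hz : z ⬝ᵥ z = 1) (k : ℕ) :
    eval z (zonalHarmonic y k) = gegenbauerNormalized (Fintype.card σ) k (y ⬝ᵥ z) := by
  induction k using Nat.twoStepInduction with
  | zero => simp [zonalHarmonic, gegenbauerNormalized]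
  | one => simp [zonalHarmonic, gegenbauerNormalized, eval_linearForm]
  | more k hk hk' =>
    simp only [zonalHarmonic, gegenbauerNormalized, smul_eval, map_sub, map_mul, eval_linearForm,
      eval_psum_two, hk, hk', hy, hz]
    ring

end Zonal

section PositiveSemidefinite

lemma posSemidef_gram_of_isPosSemidef {R M ι : Type*} [CommRing R] [PartialOrder R] [StarRing R]
    [TrivialStar R] [AddCommMonoid M] [Module R M] {B : M →ₗ[R] M →ₗ[R] R} (hB : B.IsPosSemidef)
    (v : ι → M) : (Matrix.of fun i j => B (v i) (v j)).PosSemidef := by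
  refine ⟨Matrix.IsHermitian.ext fun i j => by simp [← hB.eq (v i) (v j)], fun x => ?_⟩
  have h := hB.nonneg (Finsupp.linearCombination R v x)
  simp only [Finsupp.linearCombination_apply, Finsupp.sum, map_sum, map_smul, LinearMap.sum_apply,
    LinearMap.smul_apply, smul_eq_mul, Finset.mul_sum] at h
  rw [Finset.sum_comm] at h
  simpa [Finsupp.sum, mul_assoc, mul_comm, mul_left_comm] using h

theorem posSemidef_gegenbauerNormalized_dotProduct {σ ι : Type*} [Fintype σ] [Nontrivial σ]
    {x : ι → σ → ℝ} (hx : ∀ i, x i ⬝ᵥ x i = 1) (k : ℕ) :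
    (Matrix.of fun i j =>
      gegenbauerNormalized (Fintype.card σ) k (x i ⬝ᵥ x j)).PosSemidef := by
  obtain ⟨c, hc, reproducing⟩ := exists_pos_fischerForm_zonalHarmonic_eq (σ := σ) (K := ℝ) k
  have gram (i j : ι) : gegenbauerNormalized (Fintype.card σ) k (x i ⬝ᵥ x j) =
      c⁻¹ * fischerForm σ ℝ (zonalHarmonic (x i) k) (zonalHarmonic (x j) k) := by
    rw [reproducing _ _ (isHomogeneous_zonalHarmonic _ k) (polyLaplacian_zonalHarmonic _ k),
      eval_zonalHarmonic (hx j) (hx i), inv_mul_cancel_left₀ hc.ne', dotProduct_comm]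
  simp only [gram]
  exact (posSemidef_gram_of_isPosSemidef isPosSemidef_fischerForm _).smul (inv_nonneg.2 hc.le)

variable {E : Type*} [NormedAddCommGroup E] [InnerProductSpace ℝ E] [FiniteDimensional ℝ E] {n : ℕ}

lemma nonempty_linearIsometry_euclideanSpace (hE : Module.finrank ℝ E ≤ n) :
    Nonempty (E →ₗᵢ[ℝ] EuclideanSpace ℝ (Fin n)) := by
  let b := stdOrthonormalBasis ℝ E
  let e := EuclideanSpace.basisFun (Fin n) ℝ
  have he : Orthonormal ℝ (e ∘ Fin.castLE hE) := e.orthonormal.comp _ (Fin.castLE_injective hE)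
  refine ⟨(b.toBasis.constr ℝ (e ∘ Fin.castLE hE)).isometryOfOrthonormal (v := b.toBasis) ?_ ?_⟩
  · simp [b.orthonormal]
  · convert he
    ext1 i
    simp only [Function.comp_apply, Module.Basis.constr_basis]

theorem posSemidef_gegenbauerNormalized_inner (hn : 2 ≤ n) (hE : Module.finrank ℝ E ≤ n)
    {ι : Type*} {x : ι → E} (hx : ∀ i, ‖x i‖ = 1) (k : ℕ) :
    (Matrix.of fun i j => gegenbauerNormalized n k ⟪x i, x j⟫).PosSemidef := by
  have : Nontrivial (Fin n) := Fin.nontrivial_iff_two_le.2 hn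
  obtain ⟨φ⟩ := nonempty_linearIsometry_euclideanSpace hE
  have coordinates (i j : ι) : (φ (x i)).ofLp ⬝ᵥ (φ (x j)).ofLp = ⟪x i, x j⟫ := by
    rw [← φ.inner_map_map, EuclideanSpace.inner_eq_star_dotProduct, star_trivial, dotProduct_comm]
  simpa [coordinates] using posSemidef_gegenbauerNormalized_dotProduct
    (x := fun i => (φ (x i)).ofLp)
    (fun i => by rw [coordinates, real_inner_self_eq_norm_sq, hx, one_pow]) k

theorem schoenberg_posdef_general (hn : 2 ≤ n) (hE : Module.finrank ℝ E ≤ n) {s : Finset ℕ}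
    {f : ℕ → ℝ} (hf : ∀ k ∈ s, 0 ≤ f k) {P : ℝ → ℝ}
    (hP : ∀ t, P t = ∑ k ∈ s, f k * gegenbauerNormalized n k t)
    {ι : Type*} {x : ι → E} (hx : ∀ i, ‖x i‖ = 1) :
    (Matrix.of fun i j => P ⟪x i, x j⟫).PosSemidef := by
  have h := Matrix.posSemidef_sum s fun k hk =>
    (posSemidef_gegenbauerNormalized_inner hn hE hx k).smul (hf k hk)
  convert h
  ext i j
  simp [hP, Matrix.sum_apply]

end PositiveSemidefinite

theorem schoenberg_posdef (n : ℕ) (hn : 2 ≤ n) (d : ℕ)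
    (f : ℕ → ℝ) (hf : ∀ k, 0 ≤ f k)
    (P : ℝ → ℝ)
    (hP : ∀ t, P t = ∑ k ∈ Finset.range (d + 1), f k * gegenbauerNormalized n k t) :
    ∀ (C : Finset (EuclideanSpace ℝ (Fin n))) (α : EuclideanSpace ℝ (Fin n) → ℝ),
      (∀ c ∈ C, ‖c‖ = 1) →
      0 ≤ ∑ c ∈ C, ∑ c' ∈ C, α c * α c' * P ⟪c, c'⟫ := by
  intro C α hC
  have gram := schoenberg_posdef_general hn (by simp) (fun k _ => hf k) hP
    (x := ((↑) : C → EuclideanSpace ℝ (Fin n))) fun c => hC c c.2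
  have h := gram.dotProduct_mulVec_nonneg fun c => α c
  simp only [← Finset.sum_coe_sort C]
  simpa only [dotProduct, Matrix.mulVec, Matrix.of_apply, star_trivial, Finset.mul_sum,
    mul_left_comm, mul_comm, mul_assoc] using h
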